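/- arXiv:2007.11287 — 3 statements merged into one kernel-verified Lean document; each statement's English description precedes it below -/
import Mathlib

section
/- Let p(σ,y) = (1 + tanh((β/2)(h̃_y(σ) + q_y σ_y)))/2 denote the conditional SCA probability that site y takes spin +1 after an update from configuration σ. Then for every σ ∈ Ω and every x ∈ V, Σ_{y∈V} |p(σ,y) − p(σ^x,y)| ≤ tanh(βq_x/2) + Σ_{y∈V} tanh(β|J_{x,y}|/2), where σ^x denotes σ with the spin at x flipped. -/
open Real Finset

/-- Spin configurations: `Ω = {-1,+1}^V`. -/
abbrev Conf (V : Type*) := V → ({-1, 1} : Finset ℝ)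

instance {V : Type*} : Nonempty (Conf V) := ⟨fun _ => ⟨1, by simp⟩⟩

/-- Flip a single spin value. -/
noncomputable def spinFlip (s : ({-1, 1} : Finset ℝ)) : ({-1, 1} : Finset ℝ) :=
  ⟨-(s : ℝ), by
    have hs := s.2
    simp only [Finset.mem_insert, Finset.mem_singleton] at hs ⊢
    rcases hs with h | h <;> simp [h]⟩

/-- `σ^x`: the configuration `σ` with the spin at `x` flipped. -/
noncomputable def confFlip {V : Type*} [DecidableEq V] (σ : Conf V) (x : V) : Conf V :=
  Function.update σ x (spinFlip (σ x))

/-- `D_{σ,τ}`: the set of vertices at which `σ` and `τ` disagree. -/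
noncomputable def Dset {V : Type*} [Fintype V] (σ τ : Conf V) : Finset V :=
  Finset.univ.filter fun x => (σ x : ℝ) ≠ (τ x : ℝ)

/-- The cavity field `h̃_x(σ) = Σ_y J_{x,y} σ_y + h_x`. -/
noncomputable def cavity {V : Type*} [Fintype V] (J : V → V → ℝ) (h : V → ℝ)
    (σ : Conf V) (x : V) : ℝ :=
  (∑ y, J x y * (σ y : ℝ)) + h x

/-- The extended Hamiltonian `H̃(σ,τ)`. -/
noncomputable def Htilde {V : Type*} [Fintype V] (J : V → V → ℝ) (h q : V → ℝ)
    (σ τ : Conf V) : ℝ :=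
  -(1/2) * ∑ x, ∑ y, J x y * (σ x : ℝ) * (τ y : ℝ)
    - (1/2) * ∑ x, h x * ((σ x : ℝ) + (τ x : ℝ))
    - (1/2) * ∑ x, q x * (σ x : ℝ) * (τ x : ℝ)

/-- The Ising Hamiltonian `H(σ)`. -/
noncomputable def Hamil {V : Type*} [Fintype V] (J : V → V → ℝ) (h : V → ℝ)
    (σ : Conf V) : ℝ :=
  -(1/2) * ∑ x, ∑ y, J x y * (σ x : ℝ) * (σ y : ℝ) - ∑ x, h x * (σ x : ℝ)

/-- The SCA weight `w(σ) = Σ_τ e^{-β H̃(σ,τ)}`. -/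
noncomputable def wSCA {V : Type*} [Fintype V] [DecidableEq V] (J : V → V → ℝ)
    (h q : V → ℝ) (β : ℝ) (σ : Conf V) : ℝ :=
  ∑ τ : Conf V, Real.exp (-β * Htilde J h q σ τ)

/-- The SCA transition probability `P^SCA_{β,q}(σ,τ)`. -/
noncomputable def PSCA {V : Type*} [Fintype V] [DecidableEq V] (J : V → V → ℝ)
    (h q : V → ℝ) (β : ℝ) (σ τ : Conf V) : ℝ :=
  Real.exp (-β * Htilde J h q σ τ) / wSCA J h q β σ

/-- The SCA equilibrium distribution `π^SCA_{β,q}`. -/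
noncomputable def piSCA {V : Type*} [Fintype V] [DecidableEq V] (J : V → V → ℝ)
    (h q : V → ℝ) (β : ℝ) (σ : Conf V) : ℝ :=
  wSCA J h q β σ / ∑ τ : Conf V, wSCA J h q β τ

/-- Total-variation distance between two measures on `Ω`. -/
noncomputable def tvDist {V : Type*} [Fintype V] [DecidableEq V]
    (μ ν : Conf V → ℝ) : ℝ :=
  (1/2) * ∑ σ : Conf V, |μ σ - ν σ|

/-- The conditional SCA probability `p(σ,y)` that site `y` takes spin `+1`
after an update from configuration `σ`. -/
noncomputable def condProb {V : Type*} [Fintype V] (J : V → V → ℝ) (h q : V → ℝ)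
    (β : ℝ) (σ : Conf V) (y : V) : ℝ :=
  (1 + Real.tanh (β / 2 * (cavity J h σ y + q y * (σ y : ℝ)))) / 2

/-!
The identity `tanh u - tanh v = sinh (u - v) / (cosh u * cosh v)` together with
`2 * (cosh u * cosh v) = cosh (u + v) + cosh (u - v) ≥ 1 + cosh (u - v)` gives
`|tanh u - tanh v| ≤ 2 * tanh (|u - v| / 2)`. Flipping the spin at `x` moves the cavity field at `y`
by `2 * J y x * σ x` and the pinning term only at `y = x`, by `2 * q x * σ x`. Moving the two one
after the other, the triangle inequality keeps their contributions separate.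
-/

theorem tanh_sub_tanh (u v : ℝ) :
    Real.tanh u - Real.tanh v = Real.sinh (u - v) / (Real.cosh u * Real.cosh v) := by
  rw [Real.tanh_eq_sinh_div_cosh, Real.tanh_eq_sinh_div_cosh,
    div_sub_div _ _ (Real.cosh_pos u).ne' (Real.cosh_pos v).ne', Real.sinh_sub]

theorem sinh_two_mul_div_cosh_sq (t : ℝ) :
    Real.sinh (2 * t) / Real.cosh t ^ 2 = 2 * Real.tanh t := by
  have hcosh : Real.cosh t ≠ 0 := (Real.cosh_pos t).ne'
  rw [Real.sinh_two_mul, Real.tanh_eq_sinh_div_cosh]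
  field_simp

theorem cosh_half_sub_sq_le (u v : ℝ) :
    Real.cosh ((u - v) / 2) ^ 2 ≤ Real.cosh u * Real.cosh v := by
  have hdouble : Real.cosh (u - v) =
      Real.cosh ((u - v) / 2) ^ 2 + Real.sinh ((u - v) / 2) ^ 2 := by
    rw [← Real.cosh_two_mul, mul_div_cancel₀ _ (two_ne_zero' ℝ)]
  have hproduct : 2 * (Real.cosh u * Real.cosh v) = Real.cosh (u + v) + Real.cosh (u - v) := by
    rw [Real.cosh_add, Real.cosh_sub]
    ring
  linarith [Real.one_le_cosh (u + v), Real.cosh_sq ((u - v) / 2)]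

theorem abs_tanh_sub_tanh_le (u v : ℝ) :
    |Real.tanh u - Real.tanh v| ≤ 2 * Real.tanh (|u - v| / 2) := by
  have hcosh : Real.cosh (|u - v| / 2) ^ 2 ≤ Real.cosh u * Real.cosh v := by
    rw [← abs_two, ← abs_div, Real.cosh_abs]
    exact cosh_half_sub_sq_le u v
  calc |Real.tanh u - Real.tanh v|
      = Real.sinh |u - v| / (Real.cosh u * Real.cosh v) := by
        rw [tanh_sub_tanh, abs_div, Real.abs_sinh,
          abs_of_pos (mul_pos (Real.cosh_pos u) (Real.cosh_pos v))]
    _ ≤ Real.sinh |u - v| / Real.cosh (|u - v| / 2) ^ 2 := by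
        gcongr
    _ = 2 * Real.tanh (|u - v| / 2) := by
        rw [← sinh_two_mul_div_cosh_sq, mul_div_cancel₀ _ (two_ne_zero' ℝ)]

theorem abs_coe_spin (s : ({-1, 1} : Finset ℝ)) : |(s : ℝ)| = 1 := by
  have hs : (s : ℝ) = -1 ∨ (s : ℝ) = 1 := by
    simpa only [Finset.mem_insert, Finset.mem_singleton] using s.2
  rcases hs with hs | hs <;> simp [hs]

section SingleSiteFlip

variable {V : Type*} [DecidableEq V]

theorem coe_sub_coe_confFlip (σ : Conf V) (x y : V) :
    (σ y : ℝ) - (confFlip σ x y : ℝ) = if y = x then 2 * (σ x : ℝ) else 0 := by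
  obtain rfl | hyx := eq_or_ne y x
  · rw [if_pos rfl, confFlip, Function.update_self, spinFlip]
    ring
  · rw [if_neg hyx, confFlip, Function.update_of_ne hyx, sub_self]

theorem abs_coe_sub_coe_confFlip (σ : Conf V) (x y : V) :
    |(σ y : ℝ) - (confFlip σ x y : ℝ)| = if y = x then 2 else 0 := by
  rw [coe_sub_coe_confFlip, apply_ite abs, abs_mul, abs_coe_spin, abs_two, mul_one, abs_zero]

variable [Fintype V] (J : V → V → ℝ) (h : V → ℝ)

theorem cavity_sub_cavity_confFlip (σ : Conf V) (x y : V) :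
    cavity J h σ y - cavity J h (confFlip σ x) y = J y x * (2 * (σ x : ℝ)) := by
  simp only [cavity, add_sub_add_right_eq_sub, ← Finset.sum_sub_distrib, ← mul_sub,
    coe_sub_coe_confFlip, mul_ite, mul_zero, Finset.sum_ite_eq', Finset.mem_univ, if_true]

theorem abs_cavity_sub_cavity_confFlip (σ : Conf V) (x y : V) :
    |cavity J h σ y - cavity J h (confFlip σ x) y| = |J y x| * 2 := by
  rw [cavity_sub_cavity_confFlip, abs_mul, abs_mul, abs_coe_spin, abs_two, mul_one]

end SingleSiteFlip

theorem abs_condProb_sub_condProb_le {V : Type*} [Fintype V] (J : V → V → ℝ) (h q : V → ℝ)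
    (β : ℝ) (σ τ : Conf V) (y : V) :
    |condProb J h q β σ y - condProb J h q β τ y| ≤
      Real.tanh (|β| * (|q y| * |(σ y : ℝ) - (τ y : ℝ)|) / 4) +
        Real.tanh (|β| * |cavity J h σ y - cavity J h τ y| / 4) := by
  set u := β / 2 * (cavity J h σ y + q y * (σ y : ℝ)) with hu
  set v := β / 2 * (cavity J h τ y + q y * (τ y : ℝ)) with hv
  set w := β / 2 * (cavity J h σ y + q y * (τ y : ℝ)) with hw
  have hpin : |u - w| / 2 = |β| * (|q y| * |(σ y : ℝ) - (τ y : ℝ)|) / 4 := by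
    rw [hu, hw, ← mul_sub, add_sub_add_left_eq_sub, ← mul_sub, abs_mul, abs_mul, abs_div, abs_two]
    ring
  have hcavity : |w - v| / 2 = |β| * |cavity J h σ y - cavity J h τ y| / 4 := by
    rw [hw, hv, ← mul_sub, add_sub_add_right_eq_sub, abs_mul, abs_div, abs_two]
    ring
  calc |condProb J h q β σ y - condProb J h q β τ y|
      = |Real.tanh u - Real.tanh v| / 2 := by
        rw [condProb, condProb, ← sub_div, add_sub_add_left_eq_sub, abs_div, abs_two]
    _ ≤ (|Real.tanh u - Real.tanh w| + |Real.tanh w - Real.tanh v|) / 2 := by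
        gcongr
        exact abs_sub_le _ _ _
    _ ≤ (2 * Real.tanh (|u - w| / 2) + 2 * Real.tanh (|w - v| / 2)) / 2 := by
        gcongr <;> exact abs_tanh_sub_tanh_le _ _
    _ = Real.tanh (|β| * (|q y| * |(σ y : ℝ) - (τ y : ℝ)|) / 4) +
          Real.tanh (|β| * |cavity J h σ y - cavity J h τ y| / 4) := by
        rw [hpin, hcavity]
        ring

theorem abs_condProb_sub_condProb_confFlip_le {V : Type*} [Fintype V] [DecidableEq V]
    (J : V → V → ℝ) (h q : V → ℝ) (β : ℝ) (σ : Conf V) (x y : V) :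
    |condProb J h q β σ y - condProb J h q β (confFlip σ x) y| ≤
      (if y = x then Real.tanh (|β| * |q x| / 2) else 0) + Real.tanh (|β| * |J y x| / 2) := by
  refine (abs_condProb_sub_condProb_le J h q β σ (confFlip σ x) y).trans_eq ?_
  rw [abs_coe_sub_coe_confFlip, abs_cavity_sub_cavity_confFlip]
  congr 1
  · split_ifs with hyx
    · rw [hyx]
      ring_nf
    · rw [mul_zero, mul_zero, zero_div, Real.tanh_zero]
  · ring_nf

theorem sum_abs_condProb_flip_le_general {V : Type*} [Fintype V] [DecidableEq V]
    (J : V → V → ℝ) (h q : V → ℝ) (β : ℝ) (σ : Conf V) (x : V) :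
    ∑ y, |condProb J h q β σ y - condProb J h q β (confFlip σ x) y|
      ≤ Real.tanh (|β| * |q x| / 2) + ∑ y, Real.tanh (|β| * |J y x| / 2) := by
  calc ∑ y, |condProb J h q β σ y - condProb J h q β (confFlip σ x) y|
      ≤ ∑ y, ((if y = x then Real.tanh (|β| * |q x| / 2) else 0) +
          Real.tanh (|β| * |J y x| / 2)) :=
        Finset.sum_le_sum fun y _ => abs_condProb_sub_condProb_confFlip_le J h q β σ x y
    _ = Real.tanh (|β| * |q x| / 2) + ∑ y, Real.tanh (|β| * |J y x| / 2) := by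
        rw [Finset.sum_add_distrib, Fintype.sum_ite_eq']

/-- one-site flip estimate on the conditional update probabilities. -/
theorem sum_abs_condProb_flip_le {V : Type*} [Fintype V] [DecidableEq V]
    (J : V → V → ℝ) (hJsym : ∀ x y, J x y = J y x) (hJdiag : ∀ x, J x x = 0)
    (h q : V → ℝ) (hq : ∀ x, 0 ≤ q x) (β : ℝ) (hβ : 0 ≤ β)
    (σ : Conf V) (x : V) :
    ∑ y, |condProb J h q β σ y - condProb J h q β (confFlip σ x) y|
      ≤ Real.tanh (β * q x / 2) + ∑ y, Real.tanh (β * |J x y| / 2) := by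
  simpa only [abs_of_nonneg hβ, abs_of_nonneg (hq x), hJsym x] using
    sum_abs_condProb_flip_le_general J h q β σ x
end

section
/- (Exact factorization of the SCA transition probability) Define ε_x(σ) = e^{−βq_x/2} cosh((β/2)h̃_x(σ)) / cosh((β/2)(h̃_x(σ) + q_x σ_x)) and p_x(σ) = e^{−(β/2) h̃_x(σ) σ_x} / (2 cosh((β/2) h̃_x(σ))). Then for all σ, τ ∈ Ω, P^SCA_{β,q}(σ,τ) = Π_{x∈D_{σ,τ}} (ε_x(σ) p_x(σ)) · Π_{y∈V∖D_{σ,τ}} (1 − ε_y(σ) p_y(σ)), where D_{σ,τ} = {x ∈ V : σ_x ≠ τ_x}. -/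
open Real Finset

/-- `ε_x(σ)` from Remark 2.2(ii). -/
noncomputable def epsFactor {V : Type*} [Fintype V] (J : V → V → ℝ) (h q : V → ℝ)
    (β : ℝ) (σ : Conf V) (x : V) : ℝ :=
  Real.exp (-(β / 2) * q x) * Real.cosh (β / 2 * cavity J h σ x)
    / Real.cosh (β / 2 * (cavity J h σ x + q x * (σ x : ℝ)))

/-- `p_x(σ)` from Remark 2.2(ii). -/
noncomputable def pFactor {V : Type*} [Fintype V] (J : V → V → ℝ) (h : V → ℝ)
    (β : ℝ) (σ : Conf V) (x : V) : ℝ :=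
  Real.exp (-(β / 2) * cavity J h σ x * (σ x : ℝ))
    / (2 * Real.cosh (β / 2 * cavity J h σ x))

/-! In the extended Hamiltonian the new configuration `τ` enters linearly, so given `σ` its spins
are independent: with `a_x = (β/2)(h̃_x(σ) + q_x σ_x)`, the law of `τ_x` is proportional to
`exp (a_x τ_x)`. Since `σ_x² = 1`, the number `ε_x(σ) p_x(σ)` is the probability that this law
gives to `-σ_x`, that is, the probability that the spin at `x` flips. -/

section Spin

variable (s : ({-1, 1} : Finset ℝ))

theorem spin_eq_neg_one_or_one : (s : ℝ) = -1 ∨ (s : ℝ) = 1 := by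
  simpa only [mem_insert, mem_singleton] using s.2

theorem spin_mul_self : (s : ℝ) * s = 1 := by
  rcases spin_eq_neg_one_or_one s with hs | hs <;> norm_num [hs]

theorem coe_spinFlip : (spinFlip s : ℝ) = -s := rfl

theorem eq_spinFlip_of_ne {s t : ({-1, 1} : Finset ℝ)} (hst : (s : ℝ) ≠ t) : t = spinFlip s := by
  have hneg : (s : ℝ) = -t := (mul_self_eq_mul_self_iff.mp
    ((spin_mul_self s).trans (spin_mul_self t).symm)).resolve_left hst
  exact Subtype.ext (by rw [coe_spinFlip, hneg, neg_neg])

theorem sum_spin {M : Type*} [AddCommMonoid M] (f : ({-1, 1} : Finset ℝ) → M) :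
    ∑ u, f u = f s + f (spinFlip s) := by
  have hne : s ≠ spinFlip s := fun hs => by
    have hzero : (s : ℝ) = 0 := self_eq_neg.mp (congrArg Subtype.val hs)
    simpa [hzero] using spin_mul_self s
  have huniv : (univ : Finset ({-1, 1} : Finset ℝ)) = {s, spinFlip s} := by
    refine (eq_univ_of_forall fun u => mem_insert.mpr ?_).symm
    rcases eq_or_ne (s : ℝ) u with hsu | hsu
    · exact Or.inl (Subtype.ext hsu.symm)
    · exact Or.inr (mem_singleton.mpr (eq_spinFlip_of_ne hsu))
  rw [huniv, sum_pair hne]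

theorem sum_spin_exp_mul (a : ℝ) :
    ∑ u : ({-1, 1} : Finset ℝ), exp (a * u) = 2 * cosh a := by
  rw [sum_spin ⟨1, by simp⟩, coe_spinFlip, mul_neg, mul_one, cosh_eq]
  ring

/-- The law of a single spin in the field `a`: the probability that it takes the value `s`. -/
noncomputable def spinGibbs (a : ℝ) (s : ({-1, 1} : Finset ℝ)) : ℝ :=
  exp (a * s) / (2 * cosh a)

theorem one_sub_spinGibbs_spinFlip (a : ℝ) :
    1 - spinGibbs a (spinFlip s) = spinGibbs a s := by
  have htotal : ∑ u, spinGibbs a u = 1 := by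
    simp only [spinGibbs, ← sum_div, sum_spin_exp_mul]
    exact div_self (mul_pos two_pos (cosh_pos a)).ne'
  rw [← htotal, sum_spin s, add_sub_cancel_right]

end Spin

section Product

variable {V : Type*} [Fintype V] [DecidableEq V]

theorem exp_sum_div_sum_exp_sum (a : V → ℝ) (τ : Conf V) :
    exp (∑ x, a x * (τ x : ℝ)) / ∑ η : Conf V, exp (∑ x, a x * (η x : ℝ))
      = ∏ x, spinGibbs (a x) (τ x) := by
  simp only [spinGibbs, exp_sum, prod_div_distrib, ← sum_spin_exp_mul, Fintype.prod_sum]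

theorem prod_eq_prod_Dset_mul_prod_sdiff_Dset {M : Type*} [CommMonoid M]
    (f : V → ({-1, 1} : Finset ℝ) → M) (σ τ : Conf V) :
    ∏ x, f x (τ x)
      = (∏ x ∈ Dset σ τ, f x (spinFlip (σ x))) * ∏ y ∈ univ \ Dset σ τ, f y (σ y) := by
  rw [← prod_sdiff (subset_univ (Dset σ τ)), mul_comm]
  congr 1
  · refine prod_congr rfl fun x hx => ?_
    rw [eq_spinFlip_of_ne (mem_filter.mp hx).2]
  · refine prod_congr rfl fun y hy => ?_
    have hagree : σ y = τ y := by simpa [Dset, Subtype.coe_inj] using hy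
    rw [hagree]

end Product

section SCA

variable {V : Type*} [Fintype V]

/-- The field `(β/2) (h̃_x(σ) + q_x σ_x)` acting on the spin at `x` when the configuration `σ` is
updated. -/
noncomputable def updateField (J : V → V → ℝ) (h q : V → ℝ) (β : ℝ) (σ : Conf V) (x : V) : ℝ :=
  β / 2 * (cavity J h σ x + q x * (σ x : ℝ))

theorem sum_sum_interaction_comm (J : V → V → ℝ) (hJsym : ∀ x y, J x y = J y x) (σ τ : Conf V) :
    ∑ x, ∑ y, J x y * (σ x : ℝ) * (τ y : ℝ) = ∑ x, (∑ y, J x y * (σ y : ℝ)) * (τ x : ℝ) := by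
  simp only [sum_mul]
  rw [sum_comm]
  exact sum_congr rfl fun y _ => sum_congr rfl fun x _ => by rw [hJsym]

theorem Htilde_eq_sum_cavity (J : V → V → ℝ) (hJsym : ∀ x y, J x y = J y x) (h q : V → ℝ)
    (σ τ : Conf V) :
    Htilde J h q σ τ
      = -(1 / 2) * ∑ x, h x * (σ x : ℝ)
        - 1 / 2 * ∑ x, (cavity J h σ x + q x * (σ x : ℝ)) * (τ x : ℝ) := by
  simp only [Htilde, cavity, sum_sum_interaction_comm J hJsym, mul_add, add_mul, sum_add_distrib]
  ring

theorem exp_neg_mul_Htilde (J : V → V → ℝ) (hJsym : ∀ x y, J x y = J y x) (h q : V → ℝ) (β : ℝ)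
    (σ τ : Conf V) :
    exp (-β * Htilde J h q σ τ)
      = exp (β / 2 * ∑ x, h x * (σ x : ℝ)) * exp (∑ x, updateField J h q β σ x * (τ x : ℝ)) := by
  simp only [updateField, mul_assoc (β / 2), ← mul_sum]
  rw [Htilde_eq_sum_cavity J hJsym, ← exp_add]
  ring_nf

theorem PSCA_eq_prod_spinGibbs [DecidableEq V] (J : V → V → ℝ) (hJsym : ∀ x y, J x y = J y x)
    (h q : V → ℝ) (β : ℝ) (σ τ : Conf V) :
    PSCA J h q β σ τ = ∏ x, spinGibbs (updateField J h q β σ x) (τ x) := by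
  simp only [PSCA, wSCA, exp_neg_mul_Htilde J hJsym, ← mul_sum]
  rw [mul_div_mul_left _ _ (exp_ne_zero _), exp_sum_div_sum_exp_sum]

theorem epsFactor_mul_pFactor (J : V → V → ℝ) (h q : V → ℝ) (β : ℝ) (σ : Conf V) (x : V) :
    epsFactor J h q β σ x * pFactor J h β σ x
      = spinGibbs (updateField J h q β σ x) (spinFlip (σ x)) := by
  have hexponent : updateField J h q β σ x * -(σ x : ℝ)
      = -(β / 2) * q x + -(β / 2) * cavity J h σ x * (σ x : ℝ) := by
    rw [updateField]
    linear_combination -(β / 2) * q x * spin_mul_self (σ x)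
  rw [spinGibbs, coe_spinFlip, hexponent, exp_add, epsFactor, pFactor, ← updateField]
  field_simp

theorem sca_transition_flip_factorization_general [DecidableEq V] (J : V → V → ℝ)
    (hJsym : ∀ x y, J x y = J y x) (h q : V → ℝ) (β : ℝ) (σ τ : Conf V) :
    PSCA J h q β σ τ
      = (∏ x ∈ Dset σ τ, epsFactor J h q β σ x * pFactor J h β σ x)
        * ∏ y ∈ univ \ Dset σ τ, (1 - epsFactor J h q β σ y * pFactor J h β σ y) := by
  simp only [epsFactor_mul_pFactor, one_sub_spinGibbs_spinFlip]
  rw [PSCA_eq_prod_spinGibbs J hJsym]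
  exact prod_eq_prod_Dset_mul_prod_sdiff_Dset (fun x => spinGibbs (updateField J h q β σ x)) σ τ

end SCA

/-- exact factorization of the SCA transition probability. -/
theorem sca_transition_flip_factorization {V : Type*} [Fintype V] [DecidableEq V]
    (J : V → V → ℝ) (hJsym : ∀ x y, J x y = J y x) (hJdiag : ∀ x, J x x = 0)
    (h q : V → ℝ) (hq : ∀ x, 0 ≤ q x) (β : ℝ) (hβ : 0 ≤ β) (σ τ : Conf V) :
    PSCA J h q β σ τ
      = (∏ x ∈ Dset σ τ, epsFactor J h q β σ x * pFactor J h β σ x)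
        * ∏ y ∈ Finset.univ \ Dset σ τ,
            (1 - epsFactor J h q β σ y * pFactor J h β σ y) :=
  sca_transition_flip_factorization_general J hJsym h q β σ τ
end

section
/- (Theorem 3.2, simulated annealing for the SCA) Let λ be the largest eigenvalue of [−J_{x,y}]_{x,y∈V}, let C ⊆ V, and suppose q_x ≥ Σ_{y∈V}|J_{x,y}| − (1/2)Σ_{y∈C}|J_{x,y}| for x ∈ C and q_x ≥ λ/2 for x ∉ C. Let Γ = Σ_{x∈V}( q_x + |h_x| + Σ_{y∈V}|J_{x,y}| ) and β_t = (log t)/Γ. Then the time-inhomogeneous SCA chain is strongly ergodic with limit the uniform distribution π^G_∞ on GS: for every initial index j ≥ 1, sup_μ || μ P^SCA_{β_j,q} P^SCA_{β_{j+1},q} ⋯ P^SCA_{β_t,q} − π^G_∞ ||_TV → 0 as t → ∞, where the supremum is over all initial probability distributions μ on Ω. -/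
open Real Finset

open scoped Classical in
/-- The set of ground states `GS = argmin H`. -/
noncomputable def GS {V : Type*} [Fintype V] [DecidableEq V]
    (J : V → V → ℝ) (h : V → ℝ) : Finset (Conf V) :=
  Finset.univ.filter fun σ => ∀ τ : Conf V, Hamil J h σ ≤ Hamil J h τ

/-- The uniform distribution `π^G_∞` over the ground states. -/
noncomputable def piGinf {V : Type*} [Fintype V] [DecidableEq V]
    (J : V → V → ℝ) (h : V → ℝ) (σ : Conf V) : ℝ :=
  (if σ ∈ GS J h then 1 else 0) / ((GS J h).card : ℝ)

/-- `evolveFrom J h q βseq j μ n` is the row vector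
`μ P^SCA_{β_j,q} P^SCA_{β_{j+1},q} ⋯ P^SCA_{β_{j+n-1},q}`. -/
noncomputable def evolveFrom {V : Type*} [Fintype V] [DecidableEq V]
    (J : V → V → ℝ) (h q : V → ℝ) (βseq : ℕ → ℝ) (j : ℕ) (μ : Conf V → ℝ) :
    ℕ → Conf V → ℝ
  | 0 => μ
  | n + 1 => fun τ => ∑ σ : Conf V,
      evolveFrom J h q βseq j μ n σ * PSCA J h q (βseq (j + n)) σ τ

/-! The SCA is the Gibbs kernel of the symmetric pair energy `H̃`, so at each temperature the first
marginal of the Gibbs law of `H̃` on pairs is stationary. Since `H̃ σ ·` oscillates by at most `Γ`,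
under the schedule `log t / Γ` every entry of the `t`-th kernel is at least `1 / (|Ω| t)`; Doeblin's
contraction then bounds the distance to equilibrium by a Cesàro mean of `t` times the drift of the
equilibrium. This drift is `o(1 / t)` because the `β`-derivative of a Gibbs weight tends to zero.

It remains to identify the limit, the first marginal of the uniform law on the minimizing pairs.
Up to a constant, `H̃ σ τ` is the Ising energy at `(σ + τ) / 2` plus a quadratic form in
`(σ - τ) / 2`, which the pinning makes nonnegative. The Ising energy is affine in each coordinate,
so rounding to `±1` shows that it is minimal at a ground state, and that a minimizing pair is a
ground state together with a change of spins on which neither Hamiltonian depends. Every ground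
state therefore has equally many partners. -/

open Filter
open scoped Matrix Topology

section Chain

variable {ι : Type*} [Fintype ι]

/-- The `ℓ¹` distance of two vectors on a finite state space; between probability vectors it is
twice the total-variation distance. -/
def l1Dist (μ ν : ι → ℝ) : ℝ := ∑ i, |μ i - ν i|

lemma l1Dist_nonneg (μ ν : ι → ℝ) : 0 ≤ l1Dist μ ν :=
  Finset.sum_nonneg fun _ _ => abs_nonneg _

lemma l1Dist_triangle (μ ν ρ : ι → ℝ) : l1Dist μ ρ ≤ l1Dist μ ν + l1Dist ν ρ := by
  simp only [l1Dist, ← Finset.sum_add_distrib]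
  exact Finset.sum_le_sum fun _ _ => abs_sub_le _ _ _

lemma l1Dist_le_two {μ ν : ι → ℝ} (hμ : μ ∈ stdSimplex ℝ ι) (hν : ν ∈ stdSimplex ℝ ι) :
    l1Dist μ ν ≤ 2 :=
  calc l1Dist μ ν ≤ ∑ i, (μ i + ν i) := Finset.sum_le_sum fun i _ => by
        simpa only [abs_of_nonneg (hμ.1 i), abs_of_nonneg (hν.1 i)] using abs_sub (μ i) (ν i)
    _ = 2 := by rw [Finset.sum_add_distrib, hμ.2, hν.2]; norm_num

lemma tendsto_l1Dist {α : Type*} {l : Filter α} {μ : α → ι → ℝ} {ν : ι → ℝ}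
    (h : ∀ i, Tendsto (fun a => μ a i) l (𝓝 (ν i))) :
    Tendsto (fun a => l1Dist (μ a) ν) l (𝓝 0) := by
  simpa [l1Dist] using tendsto_finsetSum Finset.univ fun i _ => ((h i).sub_const (ν i)).abs

-- Subtracting the common part `δ` from every entry does not change the action on vectors of mass 0.
lemma l1Dist_vecMul_le {P : Matrix ι ι ℝ} {δ : ℝ} (hP : P *ᵥ 1 = 1) (hδ : ∀ i k, δ ≤ P i k)
    {μ ν : ι → ℝ} (hμν : ∑ i, μ i = ∑ i, ν i) :
    l1Dist (μ ᵥ* P) (ν ᵥ* P) ≤ (1 - Fintype.card ι * δ) * l1Dist μ ν := by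
  have hrow (i : ι) : ∑ k, P i k = 1 := by
    simpa [Matrix.mulVec, dotProduct] using congrFun hP i
  have hshift (k : ι) : (μ ᵥ* P) k - (ν ᵥ* P) k = ∑ i, (μ i - ν i) * (P i k - δ) := by
    simp only [Matrix.vecMul, dotProduct, mul_sub, sub_mul, Finset.sum_sub_distrib,
      ← Finset.sum_mul, hμν]
    ring
  calc l1Dist (μ ᵥ* P) (ν ᵥ* P)
      ≤ ∑ k, ∑ i, |μ i - ν i| * (P i k - δ) := by
        refine Finset.sum_le_sum fun k _ => ?_
        rw [hshift]
        refine (Finset.abs_sum_le_sum_abs _ _).trans_eq (Finset.sum_congr rfl fun i _ => ?_)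
        rw [abs_mul, abs_of_nonneg (sub_nonneg.2 (hδ i k))]
    _ = (1 - Fintype.card ι * δ) * l1Dist μ ν := by
        rw [Finset.sum_comm, l1Dist, Finset.mul_sum]
        refine Finset.sum_congr rfl fun i _ => ?_
        rw [← Finset.mul_sum, Finset.sum_sub_distrib, hrow]
        simp [mul_comm]

/-- The law after `n` steps of the time-inhomogeneous chain with initial law `μ` whose `k`-th
transition, counted from `0`, has matrix `P k`. -/
def chainLaw (P : ℕ → Matrix ι ι ℝ) (μ : ι → ℝ) : ℕ → ι → ℝ
  | 0 => μ
  | n + 1 => chainLaw P μ n ᵥ* P n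

lemma sum_chainLaw {P : ℕ → Matrix ι ι ℝ} (hP : ∀ n, P n *ᵥ 1 = 1) (μ : ι → ℝ) (n : ℕ) :
    ∑ i, chainLaw P μ n i = ∑ i, μ i := by
  induction n with
  | zero => rfl
  | succ n ih =>
    rw [← ih, ← dotProduct_one, chainLaw, ← Matrix.dotProduct_mulVec, hP, dotProduct_one]

lemma natCast_mul_le_of_step {D e : ℕ → ℝ} {j : ℕ} (hj : 1 ≤ j) (hD : ∀ n, 0 ≤ D n)
    (hstep : ∀ n : ℕ, (j + n : ℝ) * D (n + 1) ≤ (j + n - 1) * D n + e n) (n : ℕ) :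
    n * D n ≤ j * D 0 + ∑ k ∈ Finset.range n, e k := by
  have hj' : (1 : ℝ) ≤ j := by exact_mod_cast hj
  have htel : (j + n - 1) * D n ≤ j * D 0 + ∑ k ∈ Finset.range n, e k := by
    induction n with
    | zero => simpa using mul_le_mul_of_nonneg_right (by linarith) (hD 0)
    | succ n ih =>
      rw [Finset.sum_range_succ]
      push_cast
      linarith [hstep n]
  exact (mul_le_mul_of_nonneg_right (by linarith) (hD n)).trans htel

section Annealing

variable {P : ℕ → Matrix ι ι ℝ} {ν : ℕ → ι → ℝ} {j : ℕ}

lemma natCast_mul_l1Dist_chainLaw_le (hj : 1 ≤ j) (hP : ∀ n, P n *ᵥ 1 = 1)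
    (hmin : ∀ (n : ℕ) i k, (Fintype.card ι * (j + n : ℝ))⁻¹ ≤ P n i k)
    (hν : ∀ n, ∑ i, ν n i = 1) (hstat : ∀ n, ν n ᵥ* P n = ν n)
    {μ : ι → ℝ} (hμ : ∑ i, μ i = 1) (n : ℕ) :
    n * l1Dist (chainLaw P μ n) (ν n)
      ≤ j * l1Dist μ (ν 0) + ∑ k ∈ Finset.range n, (j + k : ℝ) * l1Dist (ν k) (ν (k + 1)) := by
  refine natCast_mul_le_of_step (D := fun n => l1Dist (chainLaw P μ n) (ν n)) hj
    (fun _ => l1Dist_nonneg _ _) (fun n => ?_) n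
  have hι : Nonempty ι := by
    by_contra h
    rw [not_nonempty_iff] at h
    simp at hμ
  have hcard : (Fintype.card ι : ℝ) ≠ 0 := by exact_mod_cast Fintype.card_ne_zero
  have : (0 : ℝ) < j + n := by exact_mod_cast Nat.add_pos_left hj n
  have hcontr := l1Dist_vecMul_le (hP n) (hmin n)
    (show ∑ i, chainLaw P μ n i = ∑ i, ν n i by rw [sum_chainLaw hP, hμ, hν])
  rw [hstat] at hcontr
  calc (j + n : ℝ) * l1Dist (chainLaw P μ (n + 1)) (ν (n + 1))
      ≤ (j + n) * (l1Dist (chainLaw P μ (n + 1)) (ν n) + l1Dist (ν n) (ν (n + 1))) := by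
        gcongr
        exact l1Dist_triangle _ _ _
    _ ≤ (j + n) * ((1 - Fintype.card ι * (Fintype.card ι * (j + n : ℝ))⁻¹)
          * l1Dist (chainLaw P μ n) (ν n) + l1Dist (ν n) (ν (n + 1))) := by
        gcongr
        exact hcontr
    _ = (j + n - 1) * l1Dist (chainLaw P μ n) (ν n)
          + (j + n : ℝ) * l1Dist (ν n) (ν (n + 1)) := by
        field_simp

-- The minorization contracts the distance to `ν n` by `1 - 1 / (j + n)`, so `(j + n - 1)` times
-- that distance grows by at most the drift: the distance is bounded by a Cesàro mean of drifts.
theorem tendstoUniformlyOn_l1Dist_chainLaw {ρ : ι → ℝ} (hj : 1 ≤ j) (hP : ∀ n, P n *ᵥ 1 = 1)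
    (hmin : ∀ (n : ℕ) i k, (Fintype.card ι * (j + n : ℝ))⁻¹ ≤ P n i k)
    (hν : ∀ n, ν n ∈ stdSimplex ℝ ι) (hstat : ∀ n, ν n ᵥ* P n = ν n)
    (hdrift : Tendsto (fun n : ℕ => (j + n : ℝ) * l1Dist (ν n) (ν (n + 1))) atTop (𝓝 0))
    (hlim : ∀ i, Tendsto (fun n => ν n i) atTop (𝓝 (ρ i))) :
    TendstoUniformlyOn (fun n μ => l1Dist (chainLaw P μ n) ρ) 0 atTop (stdSimplex ℝ ι) := by
  have hbound : Tendsto (fun n : ℕ => j * 2 / (n : ℝ) + (n : ℝ)⁻¹ *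
      ∑ k ∈ Finset.range n, (j + k : ℝ) * l1Dist (ν k) (ν (k + 1)) + l1Dist (ν n) ρ)
      atTop (𝓝 0) := by
    simpa using ((tendsto_const_div_atTop_nhds_zero_nat (j * 2 : ℝ)).add hdrift.cesaro).add
      (tendsto_l1Dist hlim)
  rw [Metric.tendstoUniformlyOn_iff]
  intro ε hε
  filter_upwards [hbound.eventually_lt_const hε, eventually_gt_atTop 0] with n hn hn0 μ hμ
  rw [Pi.zero_apply, dist_zero_left, Real.norm_of_nonneg (l1Dist_nonneg _ _)]
  refine ((l1Dist_triangle _ (ν n) _).trans ?_).trans_lt hn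
  gcongr
  rw [div_eq_inv_mul, ← mul_add, le_inv_mul_iff₀ (by exact_mod_cast hn0)]
  refine (natCast_mul_l1Dist_chainLaw_le hj hP hmin (fun n => (hν n).2) hstat hμ.2 n).trans ?_
  gcongr
  exact l1Dist_le_two hμ (hν 0)

end Annealing

end Chain

section Gibbs

variable {ι : Type*} [Fintype ι]

/-- The Gibbs distribution of the energy `E` at inverse temperature `β`. -/
noncomputable def gibbs (E : ι → ℝ) (β : ℝ) (i : ι) : ℝ :=
  exp (-β * E i) / ∑ k, exp (-β * E k)

open scoped Classical in
/-- The set of global minimizers of `E`. -/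
noncomputable def minimizers (E : ι → ℝ) : Finset ι :=
  Finset.univ.filter fun i => ∀ k, E i ≤ E k

/-- The uniform distribution on `s`; identically zero if `s` is empty. -/
noncomputable def uniformOn (s : Finset ι) (i : ι) : ℝ :=
  Set.indicator s 1 i / s.card

lemma mem_minimizers {E : ι → ℝ} {i : ι} : i ∈ minimizers E ↔ ∀ k, E i ≤ E k := by
  simp [minimizers]

lemma exists_mem_minimizers [Nonempty ι] (E : ι → ℝ) : ∃ i, i ∈ minimizers E := by
  obtain ⟨i, hi⟩ := Finite.exists_min E
  exact ⟨i, mem_minimizers.2 hi⟩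

lemma sum_exp_pos [Nonempty ι] (f : ι → ℝ) : 0 < ∑ i, exp (f i) :=
  Finset.sum_pos (fun _ _ => exp_pos _) Finset.univ_nonempty

lemma gibbs_mem_stdSimplex [Nonempty ι] (E : ι → ℝ) (β : ℝ) : gibbs E β ∈ stdSimplex ℝ ι :=
  ⟨fun _ => div_nonneg (exp_pos _).le (sum_exp_pos _).le, by
    simp only [gibbs, ← Finset.sum_div]
    exact div_self (sum_exp_pos _).ne'⟩

lemma gibbs_sub_const (E : ι → ℝ) (c β : ℝ) : gibbs (fun i => E i - c) β = gibbs E β := by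
  have hexp (x : ℝ) : exp (-β * (x - c)) = exp (-β * x) * exp (β * c) := by
    rw [← exp_add]
    ring_nf
  ext i
  simp only [gibbs, hexp, ← Finset.sum_mul]
  exact mul_div_mul_right _ _ (exp_pos _).ne'

lemma sum_uniformOn_mul (s : Finset ι) (f : ι → ℝ) :
    ∑ i, uniformOn s i * f i = (∑ i ∈ s, f i) / s.card := by
  classical
  simp [uniformOn, div_mul_eq_mul_div, ← Finset.sum_div, Set.indicator_apply]

lemma tendsto_gibbs (E : ι → ℝ) (i : ι) :
    Tendsto (fun β => gibbs E β i) atTop (𝓝 (uniformOn (minimizers E) i)) := by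
  classical
  have : Nonempty ι := ⟨i⟩
  obtain ⟨m, hm⟩ := exists_mem_minimizers E
  have hexp (k : ι) : Tendsto (fun β => exp (-β * (E k - E m))) atTop
      (𝓝 (Set.indicator (minimizers E) 1 k)) := by
    by_cases hk : k ∈ minimizers E
    · simp [hk, le_antisymm (mem_minimizers.1 hk m) (mem_minimizers.1 hm k)]
    · have hgap : 0 < E k - E m := by
        rw [mem_minimizers] at hk hm
        push Not at hk
        obtain ⟨l, hl⟩ := hk
        linarith [hm l]
      simpa [hk, Function.comp_def] using tendsto_exp_neg_atTop_nhds_zero.comp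
        (tendsto_id.atTop_mul_const hgap)
  have hcard : ((minimizers E).card : ℝ) ≠ 0 := by
    exact_mod_cast Finset.card_ne_zero_of_mem hm
  suffices Tendsto (fun β => gibbs (fun k => E k - E m) β i) atTop
      (𝓝 (uniformOn (minimizers E) i)) by simpa only [gibbs_sub_const] using this
  simp only [gibbs, uniformOn]
  refine (hexp i).div ?_ hcard
  simpa [Set.indicator_apply] using tendsto_finsetSum Finset.univ fun k _ => hexp k

lemma hasDerivAt_gibbs (E : ι → ℝ) (i : ι) (β : ℝ) :
    HasDerivAt (fun b => gibbs E b i)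
      (gibbs E β i * (∑ k, gibbs E β k * E k - E i)) β := by
  have : Nonempty ι := ⟨i⟩
  have hexp (k : ι) : HasDerivAt (fun b => exp (-b * E k)) (exp (-β * E k) * -E k) β := by
    simpa using ((hasDerivAt_id β).neg.mul_const (E k)).exp
  have hZ := (sum_exp_pos fun k => -β * E k).ne'
  refine ((hexp i).div (HasDerivAt.fun_sum fun k _ => hexp k) hZ).congr_deriv ?_
  simp only [gibbs, div_mul_eq_mul_div, ← Finset.sum_div, mul_neg, Finset.sum_neg_distrib]
  field_simp
  ring

lemma uniformOn_minimizers_mul_mean_sub (E : ι → ℝ) (i : ι) :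
    uniformOn (minimizers E) i * (∑ k, uniformOn (minimizers E) k * E k - E i) = 0 := by
  by_cases hi : i ∈ minimizers E
  · have hconst : ∀ k ∈ minimizers E, E k = E i := fun k hk =>
      le_antisymm (mem_minimizers.1 hk i) (mem_minimizers.1 hi k)
    have hcard : ((minimizers E).card : ℝ) ≠ 0 := by
      exact_mod_cast Finset.card_ne_zero_of_mem hi
    rw [sum_uniformOn_mul, Finset.sum_congr rfl hconst, Finset.sum_const, nsmul_eq_mul,
      mul_div_cancel_left₀ _ hcard, sub_self, mul_zero]
  · simp [uniformOn, hi]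

lemma tendsto_deriv_gibbs (E : ι → ℝ) (i : ι) :
    Tendsto (fun β => gibbs E β i * (∑ k, gibbs E β k * E k - E i)) atTop (𝓝 0) := by
  rw [← uniformOn_minimizers_mul_mean_sub E i]
  exact (tendsto_gibbs E i).mul
    ((tendsto_finsetSum _ fun k _ => (tendsto_gibbs E k).mul_const _).sub_const _)

end Gibbs

-- By the mean value theorem `s * (f (log (s + 1) / Γ) - f (log s / Γ))` is at most `|f' c| / Γ`
-- for some `c ≥ log s / Γ`.
lemma tendsto_mul_increment_log {f f' : ℝ → ℝ} (hf : ∀ x, HasDerivAt f (f' x) x)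
    (hf' : Tendsto f' atTop (𝓝 0)) {Γ : ℝ} (hΓ : 0 < Γ) :
    Tendsto (fun s : ℝ => s * |f (log s / Γ) - f (log (s + 1) / Γ)|) atTop (𝓝 0) := by
  have hmvt : ∀ s > 0, ∃ c ≥ log s / Γ, s * |f (log s / Γ) - f (log (s + 1) / Γ)| ≤ |f' c| / Γ := by
    intro s hs
    have hlt : log s / Γ < log (s + 1) / Γ := by gcongr; linarith
    obtain ⟨c, hc, hslope⟩ := exists_hasDerivAt_eq_slope f f' hlt
      (fun x _ => (hf x).continuousAt.continuousWithinAt) fun x _ => hf x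
    refine ⟨c, hc.1.le, ?_⟩
    have hlog : s * (log (s + 1) - log s) ≤ 1 := by
      have := log_le_sub_one_of_pos (div_pos (by linarith : 0 < s + 1) hs)
      rw [log_div (by linarith) hs.ne'] at this
      calc s * (log (s + 1) - log s) ≤ s * ((s + 1) / s - 1) := by gcongr
        _ = 1 := by field_simp; ring
    rw [eq_div_iff (sub_pos.2 hlt).ne'] at hslope
    rw [abs_sub_comm, ← hslope, abs_mul, abs_of_pos (sub_pos.2 hlt), ← sub_div]
    calc s * (|f' c| * ((log (s + 1) - log s) / Γ))
        = |f' c| * (s * (log (s + 1) - log s)) / Γ := by ring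
      _ ≤ |f' c| * 1 / Γ := by gcongr
      _ = |f' c| / Γ := by rw [mul_one]
  choose! c hc hle using hmvt
  have hc_atTop : Tendsto c atTop atTop :=
    tendsto_atTop_mono' _ ((eventually_gt_atTop 0).mono hc) (tendsto_log_atTop.atTop_div_const hΓ)
  refine squeeze_zero' ?_ ((eventually_gt_atTop 0).mono hle) ?_
  · filter_upwards [eventually_ge_atTop 0] with s hs using by positivity
  · simpa using ((hf'.comp hc_atTop).abs).div_const Γ

section PairEnergy

variable {ι : Type*} [Fintype ι] {E : ι → ι → ℝ}

/-- The transition matrix that jumps from `i` according to the Gibbs distribution of `E i`. -/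
noncomputable def gibbsKernel (E : ι → ι → ℝ) (β : ℝ) : Matrix ι ι ℝ :=
  Matrix.of fun i => gibbs (E i) β

/-- The first marginal of the Gibbs distribution of the pair energy `E`; it is the equilibrium of
`gibbsKernel E β` if `E` is symmetric. -/
noncomputable def gibbsMarginal (E : ι → ι → ℝ) (β : ℝ) (i : ι) : ℝ :=
  ∑ k, gibbs (Function.uncurry E) β (i, k)

lemma gibbsKernel_mulVec_one (E : ι → ι → ℝ) (β : ℝ) : gibbsKernel E β *ᵥ 1 = 1 := by
  ext i
  have : Nonempty ι := ⟨i⟩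
  simpa [Matrix.mulVec, dotProduct, gibbsKernel] using (gibbs_mem_stdSimplex (E i) β).2

lemma gibbsMarginal_mem_stdSimplex [Nonempty ι] (E : ι → ι → ℝ) (β : ℝ) :
    gibbsMarginal E β ∈ stdSimplex ℝ ι := by
  obtain ⟨hnonneg, hsum⟩ := gibbs_mem_stdSimplex (Function.uncurry E) β
  exact ⟨fun i => Finset.sum_nonneg fun k _ => hnonneg (i, k),
    by simpa only [gibbsMarginal, Fintype.sum_prod_type] using hsum⟩

lemma gibbsMarginal_vecMul_gibbsKernel (hE : ∀ i k, E i k = E k i) (β : ℝ) :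
    gibbsMarginal E β ᵥ* gibbsKernel E β = gibbsMarginal E β := by
  ext k
  have : Nonempty ι := ⟨k⟩
  simp only [Matrix.vecMul, dotProduct, gibbsMarginal, gibbsKernel, Matrix.of_apply, gibbs,
    ← Finset.sum_div, Function.uncurry]
  rw [Finset.sum_div]
  refine Finset.sum_congr rfl fun i _ => ?_
  rw [div_mul_div_comm, mul_comm _ (exp _), mul_div_mul_right _ _ (sum_exp_pos _).ne', hE]

lemma inv_card_mul_le_gibbs {E : ι → ℝ} {Γ s : ℝ} {i : ι} (hΓ : 0 < Γ) (hs : 1 ≤ s)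
    (hE : ∀ k, E i - E k ≤ Γ) : (Fintype.card ι * s)⁻¹ ≤ gibbs E (log s / Γ) i := by
  have : Nonempty ι := ⟨i⟩
  have hs0 : 0 < s := by linarith
  have hexp (k : ι) : exp (-(log s / Γ) * E k) ≤ s * exp (-(log s / Γ) * E i) := by
    rw [← exp_log hs0, ← exp_add, exp_log hs0, exp_le_exp]
    have := mul_le_mul_of_nonneg_left (hE k) (div_nonneg (log_nonneg hs) hΓ.le)
    rw [div_mul_cancel₀ _ hΓ.ne'] at this
    linarith
  rw [gibbs, inv_le_comm₀ (by positivity) (div_pos (exp_pos _) (sum_exp_pos _)), inv_div,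
    div_le_iff₀ (exp_pos _)]
  refine (Finset.sum_le_sum fun k _ => hexp k).trans_eq ?_
  rw [Finset.sum_const, Finset.card_univ, nsmul_eq_mul, mul_assoc]

lemma tendsto_gibbsMarginal (E : ι → ι → ℝ) (i : ι) :
    Tendsto (fun β => gibbsMarginal E β i) atTop
      (𝓝 (∑ k, uniformOn (minimizers (Function.uncurry E)) (i, k))) :=
  tendsto_finsetSum _ fun _ _ => tendsto_gibbs _ _

lemma tendsto_mul_l1Dist_gibbsMarginal (E : ι → ι → ℝ) {Γ : ℝ} (hΓ : 0 < Γ) :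
    Tendsto (fun s : ℝ => s * l1Dist (gibbsMarginal E (log s / Γ))
      (gibbsMarginal E (log (s + 1) / Γ))) atTop (𝓝 0) := by
  simp only [l1Dist, Finset.mul_sum]
  rw [← Finset.sum_const_zero (ι := ι) (s := Finset.univ)]
  refine tendsto_finsetSum _ fun i _ => tendsto_mul_increment_log (f := (gibbsMarginal E · i))
    (fun β => HasDerivAt.fun_sum fun k _ => hasDerivAt_gibbs (Function.uncurry E) (i, k) β) ?_ hΓ
  rw [← Finset.sum_const_zero (ι := ι) (s := Finset.univ)]
  exact tendsto_finsetSum _ fun k _ => tendsto_deriv_gibbs (Function.uncurry E) (i, k)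

theorem tendstoUniformlyOn_l1Dist_chainLaw_gibbsKernel_of_pos [Nonempty ι]
    (hE : ∀ i k, E i k = E k i) {Γ : ℝ} (hΓ : 0 < Γ) (hosc : ∀ i k l, E i k - E i l ≤ Γ)
    {j : ℕ} (hj : 1 ≤ j) :
    TendstoUniformlyOn
      (fun n μ => l1Dist (chainLaw (fun k : ℕ => gibbsKernel E (log (j + k) / Γ)) μ n)
        fun i => ∑ k, uniformOn (minimizers (Function.uncurry E)) (i, k))
      0 atTop (stdSimplex ℝ ι) := by
  have hs : Tendsto (fun n : ℕ => (j + n : ℝ)) atTop atTop :=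
    tendsto_atTop_add_const_left _ _ tendsto_natCast_atTop_atTop
  refine tendstoUniformlyOn_l1Dist_chainLaw (ν := fun n => gibbsMarginal E (log (j + n) / Γ)) hj
    (fun _ => gibbsKernel_mulVec_one _ _)
    (fun n i k => inv_card_mul_le_gibbs hΓ ?_ fun l => hosc i k l)
    (fun _ => gibbsMarginal_mem_stdSimplex _ _)
    (fun _ => gibbsMarginal_vecMul_gibbsKernel hE _) ?_
    fun i => (tendsto_gibbsMarginal E i).comp
      ((tendsto_log_atTop.comp hs).atTop_div_const hΓ)
  · exact_mod_cast hj.trans (Nat.le_add_right j n)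
  · simpa [Function.comp_def, add_assoc] using (tendsto_mul_l1Dist_gibbsMarginal E hΓ).comp hs

theorem tendstoUniformlyOn_l1Dist_chainLaw_gibbsKernel [Nonempty ι]
    (hE : ∀ i k, E i k = E k i) {Γ : ℝ} (hosc : ∀ i k l, E i k - E i l ≤ Γ)
    {j : ℕ} (hj : 1 ≤ j) :
    TendstoUniformlyOn
      (fun n μ => l1Dist (chainLaw (fun k : ℕ => gibbsKernel E (log (j + k) / Γ)) μ n)
        fun i => ∑ k, uniformOn (minimizers (Function.uncurry E)) (i, k))
      0 atTop (stdSimplex ℝ ι) := by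
  inhabit ι
  have hΓ : 0 ≤ Γ := by simpa using hosc default default default
  rcases hΓ.eq_or_lt with rfl | hΓ
  · -- The rows of `E` are constant, so the kernel does not depend on the temperature.
    have hconst (β β' : ℝ) : gibbsKernel E β = gibbsKernel E β' := by
      have hrow (i : ι) : E i = fun _ => E i default := funext fun k =>
        (sub_nonpos.1 (hosc i k default)).antisymm (sub_nonpos.1 (hosc i default k))
      ext i k
      simp only [gibbsKernel, Matrix.of_apply]
      rw [hrow i]
      simp only [gibbs, Finset.sum_const, nsmul_eq_mul]
      rw [div_mul_cancel_right₀ (exp_pos _).ne', div_mul_cancel_right₀ (exp_pos _).ne']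
    simpa only [hconst _ 0] using tendstoUniformlyOn_l1Dist_chainLaw_gibbsKernel_of_pos hE
      one_pos (fun i k l => (hosc i k l).trans zero_le_one) hj
  · exact tendstoUniformlyOn_l1Dist_chainLaw_gibbsKernel_of_pos hE hΓ hosc hj

end PairEnergy

lemma sum_uniformOn_prod {ι κ : Type*} [Fintype κ] {M : Finset (ι × κ)} {s : Finset ι}
    {t : ι → Finset κ} {N : ℕ} (hM : ∀ i k, (i, k) ∈ M ↔ i ∈ s ∧ k ∈ t i)
    (ht : ∀ i, (t i).card = N) (hN : N ≠ 0) (i : ι) :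
    ∑ k, uniformOn M (i, k) = uniformOn s i := by
  classical
  have hcard : M.card = s.card * N := by
    have : M = (s.sigma t).map (Equiv.sigmaEquivProd ι κ).toEmbedding := by
      ext ⟨i, k⟩
      simp [hM]
    rw [this, Finset.card_map, Finset.card_sigma, Finset.sum_const_nat fun i _ => ht i]
  have hfiber : ∑ k, Set.indicator (M : Set (ι × κ)) (1 : ι × κ → ℝ) (i, k) =
      N * Set.indicator s 1 i := by
    by_cases hi : i ∈ s <;> simp [Set.indicator_apply, hM, hi, ht]
  simp only [uniformOn, ← Finset.sum_div]
  rw [hfiber, hcard, Nat.cast_mul, mul_comm (s.card : ℝ), mul_div_mul_left]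
  exact_mod_cast hN

section Spin

variable {V : Type*}

/-- The configuration `σ` as a real vector. -/
def spinVec (σ : Conf V) (x : V) : ℝ := σ x

lemma spin_eq (σ : Conf V) (x : V) : (σ x : ℝ) = -1 ∨ (σ x : ℝ) = 1 := by
  simpa only [Finset.mem_insert, Finset.mem_singleton] using (σ x).2

lemma abs_spin (σ : Conf V) (x : V) : |(σ x : ℝ)| = 1 := by
  rcases spin_eq σ x with h | h <;> simp [h]

lemma spin_sq (σ : Conf V) (x : V) : (σ x : ℝ) ^ 2 = 1 := by
  rw [← sq_abs, abs_spin, one_pow]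

lemma exists_spinVec_eq {u : V → ℝ} (hu : ∀ x, u x = -1 ∨ u x = 1) :
    ∃ σ : Conf V, spinVec σ = u :=
  ⟨fun x => ⟨u x, by simpa only [Finset.mem_insert, Finset.mem_singleton] using hu x⟩, rfl⟩

/-- The vector `(σ + τ) / 2`, which vanishes where `σ` and `τ` disagree. -/
noncomputable def halfSum (σ τ : Conf V) : V → ℝ := (1 / 2 : ℝ) • (spinVec σ + spinVec τ)

/-- The vector `(σ - τ) / 2`, which vanishes where `σ` and `τ` agree. -/
noncomputable def halfDiff (σ τ : Conf V) : V → ℝ := (1 / 2 : ℝ) • (spinVec σ - spinVec τ)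

lemma abs_halfSum_le_one (σ τ : Conf V) (x : V) : |halfSum σ τ x| ≤ 1 := by
  rcases spin_eq σ x with hσ | hσ <;> rcases spin_eq τ x with hτ | hτ <;>
    norm_num [halfSum, spinVec, hσ, hτ]

lemma halfDiff_mem (σ τ : Conf V) (x : V) : halfDiff σ τ x ∈ ({-1, 0, 1} : Set ℝ) := by
  rcases spin_eq σ x with hσ | hσ <;> rcases spin_eq τ x with hτ | hτ <;>
    norm_num [halfDiff, spinVec, hσ, hτ]

lemma halfSum_eq_zero {σ τ : Conf V} {x : V} (h : σ x ≠ τ x) : halfSum σ τ x = 0 := by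
  have h' : (σ x : ℝ) ≠ τ x := Subtype.coe_ne_coe.2 h
  rcases spin_eq σ x with hσ | hσ <;> rcases spin_eq τ x with hτ | hτ <;>
    simp_all [halfSum, spinVec]

lemma halfDiff_eq_zero_iff {σ τ : Conf V} {x : V} : halfDiff σ τ x = 0 ↔ σ x = τ x := by
  simp only [halfDiff, spinVec, Pi.smul_apply, Pi.sub_apply, smul_eq_mul, mul_eq_zero, one_div,
    inv_eq_zero, OfNat.ofNat_ne_zero, false_or, sub_eq_zero, Subtype.ext_iff]

end Spin

section Energy

variable {V : Type*} [Fintype V] {J : Matrix V V ℝ} {h q : V → ℝ}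

/-- The Ising Hamiltonian extended to real spin vectors. -/
noncomputable def energy (J : Matrix V V ℝ) (h u : V → ℝ) : ℝ :=
  -(1 / 2) * (u ⬝ᵥ J *ᵥ u) - h ⬝ᵥ u

/-- The quadratic form that governs the cost of the disagreement `b = (σ - τ) / 2` of a pair
`(σ, τ)` in the extended Hamiltonian. -/
noncomputable def pinningForm (J : Matrix V V ℝ) (q b : V → ℝ) : ℝ :=
  1 / 2 * (b ⬝ᵥ J *ᵥ b) + ∑ x, q x * b x ^ 2

lemma dotProduct_mulVec_comm (hJ : J.IsSymm) (u v : V → ℝ) : u ⬝ᵥ J *ᵥ v = v ⬝ᵥ J *ᵥ u := by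
  rw [Matrix.dotProduct_mulVec, ← Matrix.mulVec_transpose, hJ.eq, dotProduct_comm]

lemma dotProduct_mulVec_eq_sum (u v : V → ℝ) :
    u ⬝ᵥ J *ᵥ v = ∑ x, ∑ y, J x y * u x * v y := by
  simp only [dotProduct, Matrix.mulVec, Finset.mul_sum]
  exact Finset.sum_congr rfl fun x _ => Finset.sum_congr rfl fun y _ => by ring

lemma hamil_eq_energy (J : Matrix V V ℝ) (h : V → ℝ) (σ : Conf V) :
    Hamil J h σ = energy J h (spinVec σ) := by
  rw [energy, dotProduct_mulVec_eq_sum]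
  rfl

lemma htilde_eq (J : Matrix V V ℝ) (h q : V → ℝ) (σ τ : Conf V) :
    Htilde J h q σ τ = -(1 / 2) * (spinVec σ ⬝ᵥ J *ᵥ spinVec τ)
      - 1 / 2 * (h ⬝ᵥ (spinVec σ + spinVec τ)) - 1 / 2 * ∑ x, q x * spinVec σ x * spinVec τ x := by
  rw [dotProduct_mulVec_eq_sum]
  rfl

lemma htilde_add_eq (hJ : J.IsSymm) (h q : V → ℝ) (σ τ : Conf V) :
    Htilde J h q σ τ + 1 / 2 * ∑ x, q x =
      energy J h (halfSum σ τ) + pinningForm J q (halfDiff σ τ) := by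
  have hq : ∑ x, q x * halfDiff σ τ x ^ 2 =
      1 / 2 * ∑ x, q x - 1 / 2 * ∑ x, q x * spinVec σ x * spinVec τ x := by
    rw [Finset.mul_sum, Finset.mul_sum, ← Finset.sum_sub_distrib]
    refine Finset.sum_congr rfl fun x _ => ?_
    simp only [halfDiff, Pi.smul_apply, Pi.sub_apply, smul_eq_mul, spinVec]
    linear_combination q x / 4 * (spin_sq σ x + spin_sq τ x)
  rw [htilde_eq, energy, pinningForm, hq, halfSum, halfDiff]
  simp only [Matrix.mulVec_smul, Matrix.mulVec_add, Matrix.mulVec_sub, dotProduct_smul,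
    smul_dotProduct, dotProduct_add, dotProduct_sub, add_dotProduct, sub_dotProduct,
    dotProduct_mulVec_comm hJ (spinVec τ) (spinVec σ), smul_eq_mul]
  ring

lemma htilde_self_add (hJ : J.IsSymm) (h q : V → ℝ) (σ : Conf V) :
    Htilde J h q σ σ + 1 / 2 * ∑ x, q x = Hamil J h σ := by
  have hsum : halfSum σ σ = spinVec σ := by
    rw [halfSum, ← two_smul ℝ, smul_smul]
    norm_num
  have hdiff : halfDiff σ σ = 0 := by rw [halfDiff, sub_self, smul_zero]
  rw [htilde_add_eq hJ, hamil_eq_energy, hsum, hdiff]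
  simp [pinningForm]

lemma htilde_comm (hJ : J.IsSymm) (h q : V → ℝ) (σ τ : Conf V) :
    Htilde J h q σ τ = Htilde J h q τ σ := by
  rw [htilde_eq, htilde_eq, dotProduct_mulVec_comm hJ, add_comm (spinVec σ)]
  simp only [mul_right_comm]

lemma htilde_sub_le (J : Matrix V V ℝ) (h : V → ℝ) (hq : ∀ x, 0 ≤ q x) (σ τ η : Conf V) :
    Htilde J h q σ τ - Htilde J h q σ η ≤ ∑ x, (q x + |h x| + ∑ y, |J x y|) := by
  have hdiff (x : V) (a : ℝ) : 1 / 2 * (a * ((η x : ℝ) - τ x)) ≤ |a| := by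
    have : |(η x : ℝ) - τ x| ≤ 2 := (abs_sub _ _).trans (by rw [abs_spin, abs_spin]; norm_num)
    calc 1 / 2 * (a * ((η x : ℝ) - τ x)) ≤ 1 / 2 * (|a| * |(η x : ℝ) - τ x|) := by
          rw [← abs_mul]; gcongr; exact le_abs_self _
      _ ≤ 1 / 2 * (|a| * 2) := by gcongr
      _ = |a| := by ring
  calc Htilde J h q σ τ - Htilde J h q σ η
      = ∑ x, (1 / 2 * (q x * σ x * ((η x : ℝ) - τ x)) + 1 / 2 * (h x * ((η x : ℝ) - τ x))
          + ∑ y, 1 / 2 * (J x y * σ x * ((η y : ℝ) - τ y))) := by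
        simp only [Htilde, mul_sub, mul_add, Finset.sum_add_distrib, Finset.sum_sub_distrib,
          ← Finset.mul_sum]
        ring
    _ ≤ ∑ x, (|q x * σ x| + |h x| + ∑ y, |J x y * σ x|) := by
        gcongr <;> exact hdiff _ _
    _ = ∑ x, (q x + |h x| + ∑ y, |J x y|) := by
        simp only [abs_mul, abs_spin, mul_one, abs_of_nonneg (hq _)]

end Energy

section Rounding

variable {V : Type*}

lemma update_eq_add_single [DecidableEq V] (u : V → ℝ) (x : V) (s : ℝ) :
    Function.update u x s = u + Pi.single x (s - u x) := by
  ext y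
  rcases eq_or_ne y x with rfl | hy <;> simp [*]

lemma abs_update_le_one [DecidableEq V] {u : V → ℝ} (hu : ∀ x, |u x| ≤ 1) {s : ℝ} (hs : |s| ≤ 1)
    (x y : V) : |Function.update u x s y| ≤ 1 := by
  rcases eq_or_ne y x with rfl | hy <;> simp [*]

variable [Fintype V] {J : Matrix V V ℝ} {h u : V → ℝ}

lemma energy_update [DecidableEq V] (hJ : J.IsSymm) (hdiag : ∀ x, J x x = 0) (h u : V → ℝ)
    (x : V) (s : ℝ) :
    energy J h (Function.update u x s) = energy J h u - (s - u x) * ((J *ᵥ u) x + h x) := by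
  rw [update_eq_add_single, energy, energy, Matrix.mulVec_add, dotProduct_add, add_dotProduct,
    add_dotProduct, dotProduct_mulVec_comm hJ u (Pi.single _ _)]
  simp only [dotProduct_add, single_dotProduct, dotProduct_single, Matrix.mulVec_single,
    Pi.smul_apply, Matrix.col_apply, hdiag, smul_zero]
  ring

-- The energy is affine in each coordinate, so moving a coordinate to one of `±1` decreases it.
lemma exists_hamil_le_energy (hJ : J.IsSymm) (hdiag : ∀ x, J x x = 0) (h : V → ℝ)
    (hu : ∀ x, |u x| ≤ 1) : ∃ σ : Conf V, Hamil J h σ ≤ energy J h u := by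
  classical
  suffices ∀ S : Finset V, ∃ v : V → ℝ, (∀ x, |v x| ≤ 1) ∧ (∀ x ∈ S, v x = -1 ∨ v x = 1) ∧
      energy J h v ≤ energy J h u by
    obtain ⟨v, -, hv, hle⟩ := this Finset.univ
    obtain ⟨σ, rfl⟩ := exists_spinVec_eq fun x => hv x (Finset.mem_univ x)
    exact ⟨σ, (hamil_eq_energy J h σ).trans_le hle⟩
  intro S
  induction S using Finset.induction_on with
  | empty => exact ⟨u, hu, by simp, le_rfl⟩
  | insert x S _ ih =>
    obtain ⟨v, hv, hS, hle⟩ := ih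
    obtain ⟨s, hs, hdecrease⟩ :
        ∃ s : ℝ, (s = -1 ∨ s = 1) ∧ 0 ≤ (s - v x) * ((J *ᵥ v) x + h x) := by
      have := abs_le.1 (hv x)
      rcases le_total 0 ((J *ᵥ v) x + h x) with hF | hF
      · exact ⟨1, Or.inr rfl, mul_nonneg (by linarith) hF⟩
      · exact ⟨-1, Or.inl rfl, mul_nonneg_of_nonpos_of_nonpos (by linarith) hF⟩
    refine ⟨Function.update v x s, abs_update_le_one hv ?_ x, fun y hy => ?_, ?_⟩
    · rcases hs with rfl | rfl <;> simp
    · rcases eq_or_ne y x with rfl | hyx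
      · simpa using hs
      · simpa [hyx] using hS y (Finset.mem_of_mem_insert_of_ne hy hyx)
    · rw [energy_update hJ hdiag]
      linarith

lemma field_eq_zero_of_energy_le (hJ : J.IsSymm) (hdiag : ∀ x, J x x = 0)
    (hu : ∀ x, |u x| ≤ 1) (hmin : ∀ σ, energy J h u ≤ Hamil J h σ) {x : V} (hx : |u x| < 1) :
    (J *ᵥ u) x + h x = 0 := by
  classical
  have hle (s : ℝ) (hs : |s| ≤ 1) : (s - u x) * ((J *ᵥ u) x + h x) ≤ 0 := by
    obtain ⟨σ, hσ⟩ := exists_hamil_le_energy hJ hdiag h (abs_update_le_one hu hs x)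
    linarith [hmin σ, energy_update hJ hdiag h u x s]
  obtain ⟨hlo, hhi⟩ := abs_lt.1 hx
  nlinarith [hle 1 (by simp), hle (-1) (by simp)]

lemma coupling_eq_zero_of_energy_le (hJ : J.IsSymm) (hdiag : ∀ x, J x x = 0)
    (hu : ∀ x, |u x| ≤ 1) (hmin : ∀ σ, energy J h u ≤ Hamil J h σ) {x y : V}
    (hx : |u x| < 1) (hy : |u y| < 1) : J x y = 0 := by
  classical
  rcases eq_or_ne x y with rfl | hxy
  · exact hdiag x
  have hFx := field_eq_zero_of_energy_le hJ hdiag hu hmin hx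
  have hFy := field_eq_zero_of_energy_le hJ hdiag hu hmin hy
  have hFx' : (J *ᵥ Function.update u y 1) x + h x = 0 := by
    refine field_eq_zero_of_energy_le hJ hdiag (abs_update_le_one hu (by simp) y) ?_
      (by simpa [hxy])
    simpa only [energy_update hJ hdiag, hFy, mul_zero, sub_zero] using hmin
  have hdiff : (1 - u y) * J x y = 0 := by
    simp only [update_eq_add_single, Matrix.mulVec_add, Pi.add_apply, Matrix.mulVec_single,
      Pi.smul_apply, Matrix.col_apply, op_smul_eq_smul, smul_eq_mul] at hFx'
    linarith
  exact (mul_eq_zero.1 hdiff).resolve_left (sub_pos.2 (abs_lt.1 hy).2).ne'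

end Rounding

section Pinning

variable {V : Type*} [Fintype V] {J : Matrix V V ℝ} {h q : V → ℝ} {σ τ : Conf V}

/-- The couplings are a symmetric matrix with zero diagonal, and the pinning parameters are large
enough for pairs of equal configurations to be optimal in the extended Hamiltonian. -/
structure IsPinning (J : Matrix V V ℝ) (q : V → ℝ) : Prop where
  symm : J.IsSymm
  diag_zero : ∀ x, J x x = 0
  pinningForm_nonneg : ∀ b : V → ℝ, (∀ x, b x ∈ ({-1, 0, 1} : Set ℝ)) → 0 ≤ pinningForm J q b
  coupling_eq_zero : ∀ x, q x = 0 → ∀ y, J x y = 0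

/-- A site decoupled from the pinning, the field and all other sites: the Hamiltonians do not
depend on its spin. -/
def IsFree (J : Matrix V V ℝ) (h q : V → ℝ) (x : V) : Prop :=
  q x = 0 ∧ h x = 0 ∧ ∀ y, J x y = 0

lemma IsPinning.nonneg (hJq : IsPinning J q) (x : V) : 0 ≤ q x := by
  classical
  have hform := hJq.pinningForm_nonneg (Pi.single x 1) fun y => by
    rcases eq_or_ne y x with rfl | hy <;> simp [*]
  simpa [pinningForm, hJq.diag_zero, Pi.single_apply] using hform

lemma htilde_eq_htilde_self (hJ : J.IsSymm) (hfree : ∀ x, σ x ≠ τ x → IsFree J h q x) :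
    Htilde J h q σ τ = Htilde J h q σ σ := by
  have hterm (x : V) (a : ℝ) (ha : IsFree J h q x → a = 0) : a * (τ x : ℝ) = a * σ x := by
    by_cases hx : σ x = τ x
    · rw [hx]
    · simp [ha (hfree x hx)]
  have hJτ (x y : V) : J x y * σ x * (τ y : ℝ) = J x y * σ x * σ y :=
    hterm y _ fun hy => by simp [← hJ.apply x y, hy.2.2 x]
  have hqτ (x : V) : q x * σ x * (τ x : ℝ) = q x * σ x * σ x :=
    hterm x _ fun hx => by simp [hx.1]
  have hhτ (x : V) : h x * (τ x : ℝ) = h x * σ x := hterm x _ fun hx => hx.2.1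
  simp only [Htilde, mul_add, hJτ, hqτ, hhτ]

lemma IsPinning.isFree_of_ne (hJq : IsPinning J q)
    (henergy : ∀ ρ, energy J h (halfSum σ τ) ≤ Hamil J h ρ)
    (hform : pinningForm J q (halfDiff σ τ) ≤ 0)
    {x : V} (hx : σ x ≠ τ x) : IsFree J h q x := by
  have hlt {y : V} (hy : σ y ≠ τ y) : |halfSum σ τ y| < 1 := by simp [halfSum_eq_zero hy]
  have hquad : halfDiff σ τ ⬝ᵥ J *ᵥ halfDiff σ τ = 0 := by
    rw [dotProduct_mulVec_eq_sum]
    refine Finset.sum_eq_zero fun y _ => Finset.sum_eq_zero fun z _ => ?_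
    by_cases hy : σ y = τ y
    · simp [halfDiff_eq_zero_iff.2 hy]
    by_cases hz : σ z = τ z
    · simp [halfDiff_eq_zero_iff.2 hz]
    rw [coupling_eq_zero_of_energy_le hJq.symm hJq.diag_zero (abs_halfSum_le_one σ τ) henergy
      (hlt hy) (hlt hz), zero_mul, zero_mul]
  have hq : q x = 0 := by
    have hterm : q x * halfDiff σ τ x ^ 2 ≤ ∑ y, q y * halfDiff σ τ y ^ 2 :=
      Finset.single_le_sum (f := fun y => q y * halfDiff σ τ y ^ 2)
        (fun y _ => mul_nonneg (hJq.nonneg y) (sq_nonneg _)) (Finset.mem_univ x)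
    rw [pinningForm, hquad, mul_zero, zero_add] at hform
    have hpos : 0 < halfDiff σ τ x ^ 2 := by
      have := mt halfDiff_eq_zero_iff.1 hx
      positivity
    nlinarith [hJq.nonneg x]
  have hJx := hJq.coupling_eq_zero x hq
  refine ⟨hq, ?_, hJx⟩
  simpa [Matrix.mulVec, dotProduct, hJx] using
    field_eq_zero_of_energy_le hJq.symm hJq.diag_zero (abs_halfSum_le_one σ τ) henergy (hlt hx)

lemma IsPinning.hamil_le_htilde [DecidableEq V] (hJq : IsPinning J q) {ρ : Conf V}
    (hρ : ρ ∈ GS J h) (σ τ : Conf V) :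
    Hamil J h ρ ≤ Htilde J h q σ τ + 1 / 2 * ∑ x, q x := by
  obtain ⟨η, hη⟩ := exists_hamil_le_energy hJq.symm hJq.diag_zero h (abs_halfSum_le_one σ τ)
  rw [htilde_add_eq hJq.symm]
  linarith [mem_minimizers.1 hρ η, hJq.pinningForm_nonneg _ (halfDiff_mem σ τ)]

theorem IsPinning.mem_minimizers_htilde_iff [DecidableEq V] (hJq : IsPinning J q) :
    (σ, τ) ∈ minimizers (Function.uncurry (Htilde J h q)) ↔
      σ ∈ GS J h ∧ ∀ x, σ x ≠ τ x → IsFree J h q x := by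
  simp only [mem_minimizers, Prod.forall, Function.uncurry_apply_pair]
  constructor
  · intro hmin
    have hle (ρ : Conf V) : Htilde J h q σ τ + 1 / 2 * ∑ x, q x ≤ Hamil J h ρ := by
      rw [← htilde_self_add hJq.symm h q]
      linarith [hmin ρ ρ]
    have hfree (x : V) (hx : σ x ≠ τ x) : IsFree J h q x := by
      simp only [htilde_add_eq hJq.symm] at hle
      obtain ⟨η, hη⟩ := exists_hamil_le_energy hJq.symm hJq.diag_zero h (abs_halfSum_le_one σ τ)
      exact hJq.isFree_of_ne
        (fun ρ => by linarith [hle ρ, hJq.pinningForm_nonneg _ (halfDiff_mem σ τ)])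
        (by linarith [hle η]) hx
    refine ⟨mem_minimizers.2 fun ρ => ?_, hfree⟩
    rw [← htilde_self_add hJq.symm h q σ, ← htilde_eq_htilde_self hJq.symm hfree]
    exact hle ρ
  · rintro ⟨hσ, hfree⟩ σ' τ'
    have := hJq.hamil_le_htilde hσ σ' τ'
    rw [← htilde_self_add hJq.symm h q σ, ← htilde_eq_htilde_self hJq.symm hfree] at this
    linarith

lemma IsPinning.sum_uniformOn_minimizers_htilde [DecidableEq V] (hJq : IsPinning J q)
    (h : V → ℝ) (σ : Conf V) :
    ∑ τ, uniformOn (minimizers (Function.uncurry (Htilde J h q))) (σ, τ) = piGinf J h σ := by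
  classical
  have hfibre (σ τ : Conf V) : (σ, τ) ∈ minimizers (Function.uncurry (Htilde J h q)) ↔
      σ ∈ GS J h ∧ τ ∈ Fintype.piFinset fun x => if IsFree J h q x then Finset.univ else {σ x} := by
    rw [hJq.mem_minimizers_htilde_iff, Fintype.mem_piFinset]
    refine and_congr_right fun _ => forall_congr' fun x => ?_
    by_cases hx : IsFree J h q x
    · simp only [hx, if_true, Finset.mem_univ, implies_true]
    · simp [hx, eq_comm]
  rw [sum_uniformOn_prod (N := ∏ x, if IsFree J h q x then 2 else 1) hfibre
    (fun σ => ?_) (Finset.prod_ne_zero_iff.2 fun x _ => by split_ifs <;> simp)]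
  · simp [uniformOn, piGinf, Set.indicator_apply]
  · rw [Fintype.card_piFinset]
    refine Finset.prod_congr rfl fun x _ => ?_
    split_ifs
    · rw [Finset.card_univ, Fintype.card_coe, Finset.card_pair (by norm_num)]
    · exact Finset.card_singleton _

end Pinning

section Semidefinite

open scoped MatrixOrder

lemma posSemidef_iSup_eigenvalues_smul_one_sub {n : Type*} [Fintype n] [DecidableEq n]
    {A : Matrix n n ℝ} (hA : A.IsHermitian) :
    ((⨆ i, hA.eigenvalues i) • (1 : Matrix n n ℝ) - A).PosSemidef := by
  rw [← Matrix.le_iff, ← Algebra.algebraMap_eq_smul_one]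
  refine le_algebraMap_of_spectrum_le (fun a ha => ?_) hA
  rw [hA.spectrum_real_eq_range_eigenvalues] at ha
  obtain ⟨i, rfl⟩ := ha
  exact le_ciSup (Set.finite_range _).bddAbove i

lemma eq_zero_of_posSemidef_smul_one_add {n : Type*} [Finite n] [DecidableEq n]
    {A : Matrix n n ℝ} {r : ℝ} (hdiag : ∀ i, A i i = 0)
    (hA : (r • (1 : Matrix n n ℝ) + A).PosSemidef) (hr : r ≤ 0) : A = 0 := by
  have := Fintype.ofFinite n
  have hA_psd : A.PosSemidef := by
    simpa using hA.add (Matrix.PosSemidef.one.smul (neg_nonneg.2 hr))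
  rw [← hA_psd.trace_eq_zero_iff]
  simp [Matrix.trace, hdiag]

end Semidefinite

section Sufficient

variable {V : Type*} [Fintype V] {J : Matrix V V ℝ} {q a b c : V → ℝ} {C : Finset V}

lemma neg_sum_le_dotProduct_mulVec (J : Matrix V V ℝ) (ha : ∀ x, a x ∈ ({-1, 0, 1} : Set ℝ))
    (hc : ∀ x, c x ∈ ({-1, 0, 1} : Set ℝ)) (hcC : ∀ x ∉ C, c x = 0) :
    -∑ x, (∑ y ∈ C, |J x y|) * a x ^ 2 ≤ a ⬝ᵥ J *ᵥ c := by
  refine neg_le_of_abs_le ?_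
  rw [dotProduct_mulVec_eq_sum]
  refine (Finset.abs_sum_le_sum_abs _ _).trans (Finset.sum_le_sum fun x _ => ?_)
  rw [← Finset.sum_subset (Finset.subset_univ C) fun y _ hy => by rw [hcC y hy, mul_zero],
    Finset.sum_mul]
  refine (Finset.abs_sum_le_sum_abs _ _).trans (Finset.sum_le_sum fun y _ => ?_)
  have hax := ha x
  have hcy := hc y
  simp only [Set.mem_insert_iff, Set.mem_singleton_iff] at hax hcy
  rcases hax with h | h | h <;> rcases hcy with h' | h' | h' <;> simp [h, h']

variable [DecidableEq V] {lam : ℝ}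

lemma neg_sum_sub_le_dotProduct_mulVec (hJ : J.IsSymm)
    (hlam : (lam • (1 : Matrix V V ℝ) + J).PosSemidef)
    (ha : ∀ x, a x ∈ ({-1, 0, 1} : Set ℝ)) (hc : ∀ x, c x ∈ ({-1, 0, 1} : Set ℝ))
    (haC : ∀ x ∉ C, a x = 0) (hcC : ∀ x ∈ C, c x = 0) :
    -∑ x, (2 * ∑ y, |J x y| - ∑ y ∈ C, |J x y|) * a x ^ 2 - lam * ∑ x, c x ^ 2
      ≤ (a + c) ⬝ᵥ J *ᵥ (a + c) := by
  have haa := neg_sum_le_dotProduct_mulVec J ha ha haC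
  have hac := neg_sum_le_dotProduct_mulVec J ha hc (C := Cᶜ) (by simpa using hcC)
  have hcc : 0 ≤ lam * ∑ x, c x ^ 2 + c ⬝ᵥ J *ᵥ c := by
    simpa [Matrix.add_mulVec, Matrix.smul_mulVec, dotProduct, sq, mul_add, Finset.mul_sum,
      Finset.sum_add_distrib, mul_left_comm] using hlam.dotProduct_mulVec_nonneg c
  have hsplit : ∑ x, (2 * ∑ y, |J x y| - ∑ y ∈ C, |J x y|) * a x ^ 2 =
      ∑ x, (∑ y ∈ C, |J x y|) * a x ^ 2 + 2 * ∑ x, (∑ y ∈ Cᶜ, |J x y|) * a x ^ 2 := by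
    rw [Finset.mul_sum, ← Finset.sum_add_distrib]
    refine Finset.sum_congr rfl fun x _ => ?_
    rw [← Finset.sum_add_sum_compl C fun y => |J x y|]
    ring
  rw [Matrix.mulVec_add, add_dotProduct, dotProduct_add, dotProduct_add,
    dotProduct_mulVec_comm hJ c a, hsplit]
  linarith

lemma pinningForm_nonneg_of_posSemidef (hJ : J.IsSymm)
    (hlam : (lam • (1 : Matrix V V ℝ) + J).PosSemidef)
    (hqC : ∀ x ∈ C, (∑ y, |J x y|) - 1 / 2 * ∑ y ∈ C, |J x y| ≤ q x)
    (hqnotC : ∀ x ∉ C, lam / 2 ≤ q x) (hb : ∀ x, b x ∈ ({-1, 0, 1} : Set ℝ)) :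
    0 ≤ pinningForm J q b := by
  set a : V → ℝ := fun x => if x ∈ C then b x else 0 with ha
  set c : V → ℝ := fun x => if x ∈ C then 0 else b x with hc
  have hbac : b = a + c := by
    ext x
    by_cases hx : x ∈ C <;> simp [ha, hc, hx]
  have hform := neg_sum_sub_le_dotProduct_mulVec (a := a) (c := c) (C := C) hJ hlam
    (fun x => by simp only [ha]; split_ifs; exacts [hb x, by simp])
    (fun x => by simp only [hc]; split_ifs; exacts [by simp, hb x])
    (fun x hx => if_neg hx) (fun x hx => if_pos hx)
  have hpin : 1 / 2 * ∑ x, (2 * ∑ y, |J x y| - ∑ y ∈ C, |J x y|) * a x ^ 2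
      + lam / 2 * ∑ x, c x ^ 2 ≤ ∑ x, q x * b x ^ 2 := by
    rw [Finset.mul_sum, Finset.mul_sum, ← Finset.sum_add_distrib]
    refine Finset.sum_le_sum fun x _ => ?_
    by_cases hx : x ∈ C
    · simp only [ha, hc, hx, if_true]
      linarith [mul_le_mul_of_nonneg_right (hqC x hx) (sq_nonneg (b x))]
    · simp only [ha, hc, hx, if_false]
      linarith [mul_le_mul_of_nonneg_right (hqnotC x hx) (sq_nonneg (b x))]
  rw [← hbac] at hform
  rw [pinningForm]
  linarith

theorem isPinning_of_posSemidef (hJ : J.IsSymm) (hdiag : ∀ x, J x x = 0)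
    (hlam : (lam • (1 : Matrix V V ℝ) + J).PosSemidef)
    (hqC : ∀ x ∈ C, (∑ y, |J x y|) - 1 / 2 * ∑ y ∈ C, |J x y| ≤ q x)
    (hqnotC : ∀ x ∉ C, lam / 2 ≤ q x) : IsPinning J q where
  symm := hJ
  diag_zero := hdiag
  pinningForm_nonneg _ hb := pinningForm_nonneg_of_posSemidef hJ hlam hqC hqnotC hb
  coupling_eq_zero x hqx y := by
    by_cases hx : x ∈ C
    · have hsub : ∑ y ∈ C, |J x y| ≤ ∑ y, |J x y| :=
        Finset.sum_le_univ_sum_of_nonneg fun _ => abs_nonneg _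
      have hterm := Finset.single_le_sum (fun y _ => abs_nonneg (J x y)) (Finset.mem_univ y)
      exact abs_nonpos_iff.1 (by linarith [hqC x hx])
    · rw [eq_zero_of_posSemidef_smul_one_add hdiag hlam (by linarith [hqnotC x hx])]
      rfl

theorem isPinning_of_iSup_eigenvalues_le {J : V → V → ℝ} (hdiag : ∀ x, J x x = 0)
    (hherm : (Matrix.of fun x y => -J x y).IsHermitian)
    (hqC : ∀ x ∈ C, (∑ y, |J x y|) - 1 / 2 * ∑ y ∈ C, |J x y| ≤ q x)
    (hqnotC : ∀ x ∉ C, (⨆ y, hherm.eigenvalues y) / 2 ≤ q x) : IsPinning J q := by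
  have hsymm : (Matrix.of J).IsSymm := Matrix.IsSymm.ext fun x y => by
    simpa using hherm.apply x y
  have hpsd : ((⨆ y, hherm.eigenvalues y) • (1 : Matrix V V ℝ) + Matrix.of J).PosSemidef := by
    have hneg : -Matrix.of J = Matrix.of fun x y => -J x y := rfl
    rw [← sub_neg_eq_add, hneg]
    exact posSemidef_iSup_eigenvalues_smul_one_sub hherm
  exact isPinning_of_posSemidef hsymm hdiag hpsd hqC hqnotC

end Sufficient

lemma evolveFrom_eq_chainLaw {V : Type*} [Fintype V] [DecidableEq V] (J : V → V → ℝ)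
    (h q : V → ℝ) (βseq : ℕ → ℝ) (j : ℕ) (μ : Conf V → ℝ) (n : ℕ) :
    evolveFrom J h q βseq j μ n =
      chainLaw (fun k => gibbsKernel (Htilde J h q) (βseq (j + k))) μ n := by
  induction n with
  | zero => rfl
  | succ n ih =>
    rw [evolveFrom, ih]
    rfl

lemma tendsto_sSup_image {α β : Type*} {F : α → β → ℝ} {l : Filter α} {s : Set β}
    (hF : TendstoUniformlyOn F 0 l s) (hnonneg : ∀ a b, 0 ≤ F a b) :
    Tendsto (fun a => sSup (F a '' s)) l (𝓝 0) := by
  rw [Metric.tendstoUniformlyOn_iff] at hF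
  refine tendsto_order.2 ⟨fun c hc => .of_forall fun a => hc.trans_le ?_, fun c hc => ?_⟩
  · exact Real.sSup_nonneg (by rintro _ ⟨b, -, rfl⟩; exact hnonneg a b)
  · filter_upwards [hF (c / 2) (half_pos hc)] with a ha
    refine (Real.sSup_le ?_ (half_pos hc).le).trans_lt (half_lt_self hc)
    rintro _ ⟨b, hb, rfl⟩
    simpa [abs_of_nonneg (hnonneg a b)] using (ha b hb).le

lemma tvDist_nonneg {V : Type*} [Fintype V] [DecidableEq V] (μ ν : Conf V → ℝ) :
    0 ≤ tvDist μ ν :=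
  mul_nonneg (by norm_num) (l1Dist_nonneg μ ν)

theorem sca_simulated_annealing_general {V : Type*} [Fintype V] [DecidableEq V]
    {J : V → V → ℝ} {q : V → ℝ} (hJq : IsPinning J q) {h : V → ℝ} {Γ : ℝ}
    (hosc : ∀ σ τ η, Htilde J h q σ τ - Htilde J h q σ η ≤ Γ)
    {βseq : ℕ → ℝ} (hβ : ∀ t : ℕ, 1 ≤ t → βseq t = Real.log t / Γ) {j : ℕ} (hj : 1 ≤ j) :
    Tendsto
      (fun t : ℕ => sSup {d : ℝ | ∃ μ : Conf V → ℝ, (∀ σ, 0 ≤ μ σ) ∧ (∑ σ : Conf V, μ σ = 1) ∧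
        d = tvDist (evolveFrom J h q βseq j μ (t + 1 - j)) (piGinf J h)})
      atTop (𝓝 0) := by
  have hlaw (μ : Conf V → ℝ) (n : ℕ) : evolveFrom J h q βseq j μ n =
      chainLaw (fun k : ℕ => gibbsKernel (Htilde J h q) (log (j + k) / Γ)) μ n := by
    simp only [evolveFrom_eq_chainLaw, hβ _ (hj.trans (Nat.le_add_right j _)), Nat.cast_add]
  have hunif := tendstoUniformlyOn_l1Dist_chainLaw_gibbsKernel (htilde_comm hJq.symm h q) hosc hj
  simp only [hJq.sum_uniformOn_minimizers_htilde, ← hlaw] at hunif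
  have htv : TendstoUniformlyOn (fun n μ => tvDist (evolveFrom J h q βseq j μ n) (piGinf J h)) 0
      atTop (stdSimplex ℝ (Conf V)) := by
    simpa [Function.comp_def, Pi.zero_def, tvDist, l1Dist] using
      (Real.uniformContinuous_const_mul (x := 1 / 2)).comp_tendstoUniformlyOn hunif
  have hsup := (tendsto_sSup_image htv fun _ _ => tvDist_nonneg _ _).comp (tendsto_sub_atTop_nat j)
  refine (hsup.comp (tendsto_add_atTop_nat 1)).congr fun t => congrArg sSup (Set.ext fun d => ?_)
  simp only [Set.mem_image, stdSimplex, Set.mem_ofPred_eq, and_assoc, eq_comm]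

/-- Theorem 3.2, simulated annealing for the SCA: under the
pinning condition and the logarithmic cooling schedule `β_t = (log t)/Γ`, the
time-inhomogeneous SCA chain is strongly ergodic with limit the uniform
distribution over the ground states, uniformly in the initial distribution. -/
theorem sca_simulated_annealing {V : Type*} [Fintype V] [DecidableEq V] [Nonempty V]
    (J : V → V → ℝ) (hJsym : ∀ x y, J x y = J y x) (hJdiag : ∀ x, J x x = 0)
    (h q : V → ℝ) (hq : ∀ x, 0 ≤ q x) (lam : ℝ)
    (hherm : (Matrix.of fun x y => -J x y).IsHermitian)
    (hlam : lam = ⨆ x, hherm.eigenvalues x)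
    (C : Finset V)
    (hqC : ∀ x ∈ C, (∑ y, |J x y|) - (1/2) * ∑ y ∈ C, |J x y| ≤ q x)
    (hqnotC : ∀ x ∉ C, lam / 2 ≤ q x)
    (Γ : ℝ) (hΓ : Γ = ∑ x, (q x + |h x| + ∑ y, |J x y|))
    (βseq : ℕ → ℝ) (hβ : ∀ t : ℕ, 1 ≤ t → βseq t = Real.log t / Γ) :
    ∀ j : ℕ, 1 ≤ j →
      Filter.Tendsto
        (fun t : ℕ => sSup {d : ℝ | ∃ μ : Conf V → ℝ, (∀ σ, 0 ≤ μ σ) ∧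
          (∑ σ : Conf V, μ σ = 1) ∧
          d = tvDist (evolveFrom J h q βseq j μ (t + 1 - j)) (piGinf J h)})
        Filter.atTop (nhds 0) := by
  subst hlam
  exact fun _ hj => sca_simulated_annealing_general
    (isPinning_of_iSup_eigenvalues_le hJdiag hherm hqC hqnotC)
    (fun σ τ η => (htilde_sub_le J h hq σ τ η).trans hΓ.ge) hβ hj
end
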